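/- Every Baxter equivalence class of permutations of size n contains exactly one Baxter permutation. -/

import Mathlib

open scoped Classical

/-- Baxter adjacency relations on words over the alphabet of natural numbers. -/
def BaxterAdj (w w' : List ℕ) : Prop :=
  (∃ (a b c d : ℕ) (u v : List ℕ), a ≤ b ∧ b < c ∧ c ≤ d ∧
      w = c :: (u ++ a :: d :: (v ++ [b])) ∧ w' = c :: (u ++ d :: a :: (v ++ [b]))) ∨
  (∃ (a b c d : ℕ) (u v : List ℕ), a < b ∧ b ≤ c ∧ c < d ∧
      w = b :: (u ++ d :: a :: (v ++ [c])) ∧ w' = b :: (u ++ a :: d :: (v ++ [c])))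

/-- One rewriting step: an adjacency applied inside a word (congruence context). -/
def BaxterStep (w w' : List ℕ) : Prop :=
  ∃ (p s u v : List ℕ), BaxterAdj u v ∧ w = p ++ u ++ s ∧ w' = p ++ v ++ s

/-- The Baxter congruence: the equivalence generated by the Baxter steps. -/
def BaxterEquiv : List ℕ → List ℕ → Prop := Relation.EqvGen BaxterStep

/-- Sylvester adjacency: a c u b ≡ c a u b when a ≤ b < c. -/
def SylvAdj (w w' : List ℕ) : Prop :=
  ∃ (a b c : ℕ) (u : List ℕ), a ≤ b ∧ b < c ∧
    w = a :: c :: (u ++ [b]) ∧ w' = c :: a :: (u ++ [b])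

def SylvStep (w w' : List ℕ) : Prop :=
  ∃ (p s u v : List ℕ), SylvAdj u v ∧ w = p ++ u ++ s ∧ w' = p ++ v ++ s

def SylvEquiv : List ℕ → List ℕ → Prop := Relation.EqvGen SylvStep

/-- #-sylvester adjacency: b u a c ≡ b u c a when a < b ≤ c. -/
def SylvHAdj (w w' : List ℕ) : Prop :=
  ∃ (a b c : ℕ) (u : List ℕ), a < b ∧ b ≤ c ∧
    w = b :: (u ++ [a, c]) ∧ w' = b :: (u ++ [c, a])

def SylvHStep (w w' : List ℕ) : Prop :=
  ∃ (p s u v : List ℕ), SylvHAdj u v ∧ w = p ++ u ++ s ∧ w' = p ++ v ++ s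

def SylvHEquiv : List ℕ → List ℕ → Prop := Relation.EqvGen SylvHStep

/-- The standardized word of `u`: position `i` receives the rank of the letter `u i`
(ties broken from left to right), ranks starting at `1`. -/
def std (u : List ℕ) : List ℕ :=
  (List.range u.length).map fun i =>
    ((List.range u.length).filter fun j =>
      decide (u.getD j 0 < u.getD i 0 ∨ (u.getD j 0 = u.getD i 0 ∧ j < i))).length + 1

/-- The maximal letter of a word. -/
def wordMax (u : List ℕ) : ℕ := u.foldr max 0

/-- The Schützenberger transformation: reverse and complement each letter w.r.t. max + 1. -/
def schutz (u : List ℕ) : List ℕ := u.reverse.map fun x => wordMax u + 1 - x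

/-- Labeled binary trees. -/
inductive BT where
  | leaf : BT
  | node : BT → ℕ → BT → BT
deriving DecidableEq

/-- Leaf insertion into a left binary search tree. -/
def leafInsL : BT → ℕ → BT
  | .leaf, a => .node .leaf a .leaf
  | .node l b r, a => if a < b then .node (leafInsL l a) b r else .node l b (leafInsL r a)

/-- Leaf insertion into a right binary search tree. -/
def leafInsR : BT → ℕ → BT
  | .leaf, a => .node .leaf a .leaf
  | .node l b r, a => if a ≤ b then .node (leafInsR l a) b r else .node l b (leafInsR r a)

/-- The lower restricted tree `T_{≤ a}` of a right binary search tree. -/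
def splitLE : BT → ℕ → BT
  | .leaf, _ => .leaf
  | .node l b r, a => if b ≤ a then .node l b (splitLE r a) else splitLE l a

/-- The higher restricted tree `T_{> a}` of a right binary search tree. -/
def splitGT : BT → ℕ → BT
  | .leaf, _ => .leaf
  | .node l b r, a => if b ≤ a then splitGT r a else .node (splitGT l a) b r

/-- Root insertion into a right binary search tree. -/
def rootIns (t : BT) (a : ℕ) : BT := .node (splitLE t a) a (splitGT t a)

/-- The left tree of the P-symbol: leaf insertions from left to right. -/
def insL (u : List ℕ) : BT := u.foldl leafInsL .leaf

/-- The right tree of the P-symbol: root insertions from left to right. -/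
def insR (u : List ℕ) : BT := u.foldl rootIns .leaf

/-- The P-symbol of a word. -/
def Psymb (u : List ℕ) : BT × BT := (insL u, insR u)

/-- Unlabeled binary trees. -/
inductive UBT where
  | leaf : UBT
  | node : UBT → UBT → UBT
deriving DecidableEq

/-- The shape of a labeled binary tree. -/
def shape : BT → UBT
  | .leaf => .leaf
  | .node l _ r => .node (shape l) (shape r)

/-- The shape of the P-symbol of a word. -/
def Pshape (u : List ℕ) : UBT × UBT := (shape (insL u), shape (insR u))

/-- Number of internal nodes. -/
def sizeU : UBT → ℕ
  | .leaf => 0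
  | .node l r => sizeU l + sizeU r + 1

/-- Orientations of the leaves, from left to right: `true` means right-oriented
(the leaf is the right child of its parent); the parameter is the orientation
assigned if the tree is reduced to a leaf. -/
def loU : UBT → Bool → List Bool
  | .leaf, b => [b]
  | .node l r, _ => loU l false ++ loU r true

/-- Leaf orientations of a labeled binary tree. -/
def loB : BT → Bool → List Bool
  | .leaf, b => [b]
  | .node l _ r, _ => loB l false ++ loB r true

/-- The canopy: orientations of the leaves except the first and the last one. -/
def canU (t : UBT) : List Bool := ((loU t false).drop 1).dropLast

/-- A pair of twin binary trees: same number of nodes and complementary canopies. -/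
def IsTwin (J : UBT × UBT) : Prop :=
  sizeU J.1 = sizeU J.2 ∧ (canU J.1).length = (canU J.2).length ∧
    ∀ i < (canU J.1).length, (canU J.1).getD i false ≠ (canU J.2).getD i false

/-- `σ` is (the word of) a permutation of `{1, …, n}`. -/
def IsPerm (n : ℕ) (σ : List ℕ) : Prop := σ.Perm (List.range' 1 n)

/-- Covering-type step of the right permutohedron (weak) order: exchange of two
adjacent letters `a < b`. -/
def PermutoStep (σ ν : List ℕ) : Prop :=
  ∃ (p s : List ℕ) (a b : ℕ), a < b ∧ σ = p ++ a :: b :: s ∧ ν = p ++ b :: a :: s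

/-- The right permutohedron (weak) order. -/
def PermutoLe : List ℕ → List ℕ → Prop := Relation.ReflTransGen PermutoStep

/-- Baxter permutations: avoiding the generalized patterns 2-41-3 and 3-14-2. -/
def IsBaxterPerm (σ : List ℕ) : Prop :=
  ∀ i j k, i < j → j + 1 < k → k < σ.length →
    ¬(σ.getD (j+1) 0 < σ.getD i 0 ∧ σ.getD i 0 < σ.getD k 0 ∧ σ.getD k 0 < σ.getD j 0) ∧
    ¬(σ.getD j 0 < σ.getD k 0 ∧ σ.getD k 0 < σ.getD i 0 ∧ σ.getD i 0 < σ.getD (j+1) 0)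

/-!
Baxter permutations are generated by inserting a new maximal letter `N` at the *active sites*: just
before a left-to-right maximum, just after a right-to-left maximum, or at either end. In any other
place `N` can be moved by Baxter exchanges, and it reaches an active site by sliding towards the
largest of the remaining letters; hence every class contains a Baxter word. For uniqueness, the
congruence is compatible with restriction to an interval of letters and preserves the first and the
last letter. Deleting `N` therefore reduces to smaller words, and restricting to the letters `≥ h`
distinguishes the active site before a left-to-right maximum `h` from every site further right.
-/

section Words

variable {α : Type*}

theorem append_eq_append_cons_cons {p s p' s' : List α} {a d : α}
    (h : p ++ s = p' ++ a :: d :: s') :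
    (∃ r, p' = p ++ r ∧ s = r ++ a :: d :: s') ∨
      (p = p' ++ [a] ∧ s = d :: s') ∨ ∃ r, p = p' ++ a :: d :: r ∧ s' = r ++ s := by
  rcases List.append_eq_append_iff.1 h with ⟨r, hp', hs⟩ | ⟨r, hp, hs⟩
  · exact .inl ⟨r, hp', hs⟩
  · match r with
    | [] => exact .inl ⟨[], by simpa using hp.symm, by simpa using hs.symm⟩
    | [b] => simp_all
    | b :: c :: r => simp_all

variable [LinearOrder α]

theorem exists_eq_append_cons_max {w : List α} (hw : w ≠ []) (hnd : w.Nodup) :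
    ∃ p N s, w = p ++ N :: s ∧ ∀ z ∈ p ++ s, z < N := by
  obtain ⟨N, hN⟩ := WithBot.ne_bot_iff_exists.1 (List.maximum_ne_bot_of_ne_nil hw)
  obtain ⟨hNw, hle⟩ := List.maximum_eq_coe_iff.1 hN.symm
  obtain ⟨p, s, rfl⟩ := List.append_of_mem hNw
  have hNps : N ∉ p ++ s := (List.nodup_cons.1 (List.nodup_middle.1 hnd)).1
  refine ⟨p, N, s, rfl, fun z hz => lt_of_le_of_ne (hle z ?_) (ne_of_mem_of_not_mem hz hNps)⟩
  exact List.perm_middle.mem_iff.2 (List.mem_cons_of_mem N hz)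

theorem nodup_induction_on_max {P : ∀ w : List α, w.Nodup → Prop} (nil : P [] .nil)
    (insert : ∀ (p : List α) (N : α) (s : List α) (hnd : (p ++ s).Nodup)
      (hnd' : (p ++ N :: s).Nodup), (∀ z ∈ p ++ s, z < N) → P (p ++ s) hnd → P (p ++ N :: s) hnd')
    (w : List α) (hnd : w.Nodup) : P w hnd := by
  induction hn : w.length generalizing w with
  | zero =>
    obtain rfl := List.length_eq_zero_iff.1 hn
    exact nil
  | succ n ih =>
    obtain ⟨p, N, s, rfl, hN⟩ :=
      exists_eq_append_cons_max (List.ne_nil_of_length_eq_add_one hn) hnd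
    have hps : (p ++ s).Nodup := (List.nodup_cons.1 (List.nodup_middle.1 hnd)).2
    have hlen : (p ++ s).length = n := by
      simpa only [List.length_append, List.length_cons, ← Nat.add_assoc, Nat.add_right_cancel_iff]
        using hn
    exact insert p N s hps hnd hN (ih _ hps hlen)

end Words

section Swaps

variable {α : Type*} [LinearOrder α]

/-- Exchange of two adjacent letters `a`, `d` such that a letter before them and a letter after
them lie strictly between `a` and `d`. On words without repeated letters these are the Baxter
adjacencies and their inverses; unlike those, they are visibly stable under reversal of words. -/
inductive BaxterSwap : List α → List α → Prop
  | swap {p s : List α} {a d x y : α} (hxp : x ∈ p) (hys : y ∈ s)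
      (hx : x ∈ Set.uIoo a d) (hy : y ∈ Set.uIoo a d) :
      BaxterSwap (p ++ a :: d :: s) (p ++ d :: a :: s)

/-- The equivalence generated by `BaxterSwap`, which is a symmetric relation: the Baxter congruence
on words without repeated letters. -/
def SwapEquiv : List α → List α → Prop := Relation.ReflTransGen BaxterSwap

variable {u v : List α} {N : α}

namespace BaxterSwap

theorem symm (h : BaxterSwap u v) : BaxterSwap v u := by
  obtain ⟨hxp, hys, hx, hy⟩ := h
  rw [Set.uIoo_comm] at hx hy
  exact swap hxp hys hx hy

theorem perm (h : BaxterSwap u v) : u.Perm v := by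
  obtain @⟨p, s, a, d, -⟩ := h
  exact (List.Perm.swap d a s).append_left p

theorem reverse (h : BaxterSwap u v) : BaxterSwap u.reverse v.reverse := by
  obtain @⟨p, s, a, d, x, y, hxp, hys, hx, hy⟩ := h
  rw [Set.uIoo_comm] at hx hy
  simpa using swap (List.mem_reverse.2 hys) (List.mem_reverse.2 hxp) hy hx

theorem head?_eq (h : BaxterSwap u v) : u.head? = v.head? := by
  obtain ⟨hxp, -⟩ := h
  simp only [List.head?_append_of_ne_nil _ (List.ne_nil_of_mem hxp)]

theorem filter_mem (h : BaxterSwap u v) (I : Set α) [I.OrdConnected]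
    [DecidablePred (· ∈ I)] :
    SwapEquiv (u.filter (· ∈ I)) (v.filter (· ∈ I)) := by
  obtain @⟨p, s, a, d, x, y, hxp, hys, hx, hy⟩ := h
  by_cases had : a ∈ I ∧ d ∈ I
  · have hsub : Set.uIoo a d ⊆ I :=
      Set.uIoo_subset_uIcc_self.trans (Set.OrdConnected.uIcc_subset ‹_› had.1 had.2)
    refine .single ?_
    simpa [had] using swap (p := p.filter (· ∈ I)) (s := s.filter (· ∈ I))
      (by simp [hxp, hsub hx]) (by simp [hys, hsub hy]) hx hy
  · have : (p ++ a :: d :: s).filter (· ∈ I) = (p ++ d :: a :: s).filter (· ∈ I) := by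
      by_cases ha : a ∈ I <;> by_cases hd : d ∈ I <;> simp_all
    rw [this]
    exact .refl

theorem exists_insert_max (h : BaxterSwap u v) (hN : ∀ z ∈ u, z < N) {p s : List α}
    (hu : u = p ++ s) :
    ∃ p' s', v = p' ++ s' ∧ SwapEquiv (p ++ N :: s) (p' ++ N :: s') := by
  obtain @⟨p₀, s₀, a, d, x, y, hxp, hys, hx, hy⟩ := h
  have haN : a < N := hN a (by simp)
  have hdN : d < N := hN d (by simp)
  rcases append_eq_append_cons_cons hu.symm with ⟨r, rfl, rfl⟩ | ⟨rfl, rfl⟩ | ⟨r, rfl, rfl⟩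
  · refine ⟨p, r ++ d :: a :: s₀, by simp, .single ?_⟩
    simpa using swap (p := p ++ N :: r) (by grind) hys hx hy
  · rcases lt_trichotomy a d with had | rfl | had
    · rw [Set.uIoo_of_lt had] at hx hy
      refine ⟨p₀, d :: a :: s₀, rfl, .head (b := p₀ ++ N :: a :: d :: s₀) ?_ (.single ?_)⟩
      · simpa using swap (s := d :: s₀) hxp (List.mem_cons_of_mem d hys)
          (Set.mem_uIoo_of_lt hx.1 (hx.2.trans hdN)) (Set.mem_uIoo_of_lt hy.1 (hy.2.trans hdN))
      · simpa using swap (p := p₀ ++ [N]) (List.mem_append_left _ hxp) hys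
          (Set.mem_uIoo_of_lt hx.1 hx.2) (Set.mem_uIoo_of_lt hy.1 hy.2)
    · simp at hx
    · rw [Set.uIoo_of_gt had] at hx hy
      refine ⟨p₀ ++ [d, a], s₀, by simp, .head (b := p₀ ++ a :: d :: N :: s₀) ?_ (.single ?_)⟩
      · simpa using swap (p := p₀ ++ [a]) (List.mem_append_left _ hxp) hys
          (Set.mem_uIoo_of_gt hx.1 (hx.2.trans haN)) (Set.mem_uIoo_of_gt hy.1 (hy.2.trans haN))
      · simpa using swap (s := N :: s₀) hxp (List.mem_cons_of_mem N hys)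
          (Set.mem_uIoo_of_gt hx.1 hx.2) (Set.mem_uIoo_of_gt hy.1 hy.2)
  · refine ⟨p₀ ++ d :: a :: r, s, by simp, .single ?_⟩
    simpa using swap (s := r ++ N :: s) hxp (by grind) hx hy

end BaxterSwap

namespace SwapEquiv

theorem symm (h : SwapEquiv u v) : SwapEquiv v u := by
  induction h with
  | refl => exact .refl
  | tail _ hswap ih => exact .head hswap.symm ih

theorem perm (h : SwapEquiv u v) : u.Perm v := by
  induction h with
  | refl => exact .refl _
  | tail _ hswap ih => exact ih.trans hswap.perm

theorem reverse (h : SwapEquiv u v) : SwapEquiv u.reverse v.reverse :=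
  Relation.ReflTransGen.lift List.reverse (fun _ _ hswap => hswap.reverse) _ _ h

theorem head?_eq (h : SwapEquiv u v) : u.head? = v.head? := by
  induction h with
  | refl => rfl
  | tail _ hswap ih => exact ih.trans hswap.head?_eq

theorem filter_mem (h : SwapEquiv u v) (I : Set α) [I.OrdConnected]
    [DecidablePred (· ∈ I)] :
    SwapEquiv (u.filter (· ∈ I)) (v.filter (· ∈ I)) :=
  Relation.ReflTransGen.lift' (List.filter (· ∈ I)) (fun _ _ hswap => hswap.filter_mem I) _ _ h

theorem exists_insert_max (h : SwapEquiv u v) (hN : ∀ z ∈ u, z < N) {p s : List α}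
    (hu : u = p ++ s) :
    ∃ p' s', v = p' ++ s' ∧ SwapEquiv (p ++ N :: s) (p' ++ N :: s') := by
  induction h with
  | refl => exact ⟨p, s, hu, .refl⟩
  | tail huv hswap ih =>
    obtain ⟨p₁, s₁, hv, h₁⟩ := ih
    obtain ⟨p₂, s₂, hw, h₂⟩ :=
      hswap.exists_insert_max (fun z hz => hN z ((perm huv).mem_iff.2 hz)) hv
    exact ⟨p₂, s₂, hw, h₁.trans h₂⟩

end SwapEquiv

end Swaps

section Avoidance

variable {α : Type*} [LinearOrder α]

/-- Avoidance of the generalized patterns `2-41-3` and `3-14-2` (compare `IsBaxterPerm`), phrased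
by factorizations of the word: `a`, `d` are the adjacent letters, `x`, `y` the outer ones. -/
def AvoidsBaxterPatterns (w : List α) : Prop :=
  ∀ ⦃p s : List α⦄ ⦃a d x y : α⦄, w = p ++ a :: d :: s → x ∈ p → y ∈ s →
    ¬(d < x ∧ x < y ∧ y < a) ∧ ¬(a < y ∧ y < x ∧ x < d)

/-- The gap in `p ++ s` between `p` and `s` is an active site if it lies at an end of the word,
just before a left-to-right maximum, or just after a right-to-left maximum. -/
def IsActiveSite (p s : List α) : Prop :=
  (∀ h ∈ s.head?, ∀ z ∈ p, z < h) ∨ ∀ g ∈ p.getLast?, ∀ z ∈ s, z < g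

variable {p s : List α} {N : α}

theorem IsActiveSite.reverse (h : IsActiveSite p s) : IsActiveSite s.reverse p.reverse := by
  simpa [IsActiveSite, or_comm] using h

theorem AvoidsBaxterPatterns.insert_max (hw : AvoidsBaxterPatterns (p ++ s))
    (hN : ∀ z ∈ p ++ s, z < N) (hsite : IsActiveSite p s) :
    AvoidsBaxterPatterns (p ++ N :: s) := by
  intro p' s' a d x y h hx hy
  rcases append_eq_append_cons_cons h with ⟨r, rfl, hs⟩ | ⟨rfl, hs⟩ | ⟨r, rfl, rfl⟩
  · cases r with
    | nil =>
      obtain ⟨rfl, rfl⟩ : N = a ∧ s = d :: s' := by simpa using hs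
      rw [List.append_nil] at hx
      rcases hsite with hsite | hsite
      · have hxd : x < d := hsite d (by simp) x hx
        grind
      · obtain ⟨q, g, rfl⟩ := (List.eq_nil_or_concat' _).resolve_left (List.ne_nil_of_mem hx)
        have hyg : y < g := hsite g (by simp) y (by simp [hy])
        have hgd := hw (p := q) (s := s') (a := g) (d := d) (x := x) (y := y) (by simp)
        grind
    | cons _ r =>
      obtain ⟨rfl, rfl⟩ := List.cons_eq_cons.1 hs
      have had := hw (p := p ++ r) (s := s') (a := a) (d := d) (x := x) (y := y) (by simp)
      grind
  · obtain ⟨rfl, rfl⟩ := List.cons_eq_cons.1 hs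
    rcases hsite with hsite | hsite
    · obtain ⟨b, t, rfl⟩ := List.exists_cons_of_ne_nil (List.ne_nil_of_mem hy)
      have hxb : x < b := hsite b (by simp) x (by simp [hx])
      have hab := hw (p := p') (s := t) (a := a) (d := b) (x := x) (y := y) (by simp)
      grind
    · have hya : y < a := hsite a (by simp) y hy
      grind
  · have had := hw (p := p') (s := r ++ s) (a := a) (d := d) (x := x) (y := y) (by simp) hx
    grind

theorem AvoidsBaxterPatterns.of_insert_max (hw : AvoidsBaxterPatterns (p ++ N :: s))
    (hN : ∀ z ∈ p ++ s, z < N) : AvoidsBaxterPatterns (p ++ s) := by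
  intro p' s' a d x y h hx hy
  rcases append_eq_append_cons_cons h with ⟨r, rfl, rfl⟩ | ⟨rfl, rfl⟩ | ⟨r, rfl, rfl⟩
  · exact hw (p := p ++ N :: r) (by simp) (by grind) hy
  · have hNd := hw (p := p' ++ [a]) (s := s') (a := N) (d := d) (x := x) (y := y) (by simp)
      (by simp [hx]) hy
    have haN := hw (p := p') (s := d :: s') (a := a) (d := N) (x := x) (y := y) (by simp)
      hx (by simp [hy])
    grind
  · exact hw (s := r ++ N :: s) (by simp) hx (by grind)

theorem AvoidsBaxterPatterns.isActiveSite (hw : AvoidsBaxterPatterns (p ++ N :: s))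
    (hnd : (p ++ s).Nodup) (hN : ∀ z ∈ p ++ s, z < N) : IsActiveSite p s := by
  rw [IsActiveSite]
  by_contra! hcon
  obtain ⟨⟨h, hs, x, hx, hhx⟩, g, hp, y, hy, hgy⟩ := hcon
  obtain ⟨t, rfl⟩ := List.head?_eq_some_iff.1 hs
  obtain ⟨q, rfl⟩ := List.getLast?_eq_some_iff.1 hp
  have hdisj := List.disjoint_of_nodup_append hnd
  have hxy : x ≠ y := fun hxy => hdisj hx (hxy ▸ hy)
  rcases lt_or_gt_of_ne hxy with hxy | hxy
  · exact (hw rfl hx (by grind)).1 ⟨by grind, hxy, hN y (List.mem_append_right _ hy)⟩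
  · exact (hw (p := q) (a := g) (d := N) (s := h :: t) (by simp) (by grind) hy).2
      ⟨by grind, hxy, hN x (List.mem_append_left _ hx)⟩

end Avoidance

section CanonicalForm

variable {α : Type*} [LinearOrder α] {p s p' s' w w' : List α} {N : α}

theorem exists_isActiveSite_of_exists_max_right (hnd : (p ++ s).Nodup) (hN : ∀ z ∈ p ++ s, z < N)
    (hmax : ∃ m ∈ s, ∀ x ∈ p, x < m) :
    ∃ p' s', p' ++ s' = p ++ s ∧ IsActiveSite p' s' ∧
      SwapEquiv (p ++ N :: s) (p' ++ N :: s') := by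
  induction s generalizing p with
  | nil => simp at hmax
  | cons h t ih =>
    by_cases hp : ∀ z ∈ p, z < h
    · exact ⟨p, h :: t, rfl, .inl (by simpa using hp), .refl⟩
    obtain ⟨m, hm, hpm⟩ := hmax
    obtain ⟨x, hx, hhx⟩ : ∃ x ∈ p, h < x := by grind
    have hmt : m ∈ t := by grind
    obtain ⟨p', s', heq, hsite, hequiv⟩ :=
      ih (p := p ++ [h]) (by simpa using hnd) (by simpa using hN) ⟨m, hmt, by grind⟩
    have hswap : BaxterSwap (p ++ N :: h :: t) (p ++ h :: N :: t) :=
      .swap hx hmt (Set.mem_uIoo_of_gt hhx (hN x (by simp [hx])))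
        (Set.mem_uIoo_of_gt (hhx.trans (hpm x hx)) (hN m (by simp [hmt])))
    exact ⟨p', s', by simpa using heq, hsite, .head hswap (by simpa [SwapEquiv] using hequiv)⟩

theorem exists_isActiveSite (hnd : (p ++ s).Nodup) (hN : ∀ z ∈ p ++ s, z < N) :
    ∃ p' s', p' ++ s' = p ++ s ∧ IsActiveSite p' s' ∧
      SwapEquiv (p ++ N :: s) (p' ++ N :: s') := by
  by_cases hps : p ++ s = []
  · exact ⟨p, s, rfl, .inl (by simp_all), .refl⟩
  obtain ⟨q, m, t, heq, hm⟩ := exists_eq_append_cons_max hps hnd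
  have hdisj : p.Disjoint s := List.disjoint_of_nodup_append hnd
  have hlt : ∀ z ∈ p ++ s, z ≠ m → z < m := by grind
  have hmem : m ∈ p ∨ m ∈ s := List.mem_append.1 (by rw [heq]; simp)
  rcases hmem.symm with hms | hmp
  · exact exists_isActiveSite_of_exists_max_right hnd hN
      ⟨m, hms, fun x hx => hlt x (by simp [hx]) fun hxm => hdisj hx (hxm ▸ hms)⟩
  · obtain ⟨p', s', hps', hsite, hequiv⟩ :=
      exists_isActiveSite_of_exists_max_right (p := s.reverse) (s := p.reverse) (N := N)
        (by simpa using List.nodup_reverse.2 hnd) (by grind)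
        ⟨m, by simpa using hmp, fun y hy => hlt y (by grind) (by grind)⟩
    exact ⟨s'.reverse, p'.reverse, by simpa using congrArg List.reverse hps', hsite.reverse,
      by simpa using hequiv.reverse⟩

theorem exists_swapEquiv_avoidsBaxterPatterns (hnd : w.Nodup) :
    ∃ τ, SwapEquiv w τ ∧ AvoidsBaxterPatterns τ := by
  induction w, hnd using nodup_induction_on_max with
  | nil => exact ⟨[], .refl, by simp [AvoidsBaxterPatterns]⟩
  | insert p N s hnd _ hN ih =>
    obtain ⟨τ, hτ, hav⟩ := ih
    obtain ⟨p₁, s₁, rfl, h₁⟩ := hτ.exists_insert_max hN rfl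
    have hN₁ : ∀ z ∈ p₁ ++ s₁, z < N := fun z hz => hN z (hτ.perm.mem_iff.2 hz)
    obtain ⟨p₂, s₂, heq, hsite, h₂⟩ := exists_isActiveSite (hτ.perm.nodup hnd) hN₁
    rw [← heq] at hav hN₁
    exact ⟨p₂ ++ N :: s₂, h₁.trans h₂, hav.insert_max hN₁ hsite⟩

theorem not_swapEquiv_of_prefix_lt {h : α} (hp : ∀ z ∈ p, z < h) (hN : h < N) :
    ¬SwapEquiv (p ++ N :: s) (p ++ h :: s') := by
  intro hequiv
  have hhead := (hequiv.filter_mem (Set.Ici h)).head?_eq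
  have hpIci : p.filter (· ∈ Set.Ici h) = [] := by simpa [List.filter_eq_nil_iff] using hp
  rw [List.filter_append, List.filter_append, hpIci, List.nil_append, List.nil_append,
    List.filter_cons_of_pos (by simpa using hN.le), List.filter_cons_of_pos (by simp)] at hhead
  exact hN.ne' (by simpa using hhead)

theorem not_swapEquiv_of_suffix_lt {g : α} (hs : ∀ z ∈ s, z < g) (hN : g < N) :
    ¬SwapEquiv (p ++ N :: s) (p' ++ g :: s) := fun hequiv =>
  not_swapEquiv_of_prefix_lt (p := s.reverse) (s := p.reverse) (s' := p'.reverse)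
    (by simpa using hs) hN (by simpa using hequiv.reverse)

theorem SwapEquiv.eq_nil_of_isActiveSite {q : List α}
    (hequiv : SwapEquiv (p ++ N :: (q ++ s)) (p ++ q ++ N :: s)) (hN : ∀ z ∈ q, z < N)
    (hsite : IsActiveSite p (q ++ s)) (hsite' : IsActiveSite (p ++ q) s) : q = [] := by
  by_contra hq
  obtain ⟨h, q₁, hq₁⟩ := List.exists_cons_of_ne_nil hq
  obtain ⟨q₂, g, hq₂⟩ := (List.eq_nil_or_concat' q).resolve_left hq
  have hleft : ∃ z ∈ p, h ≤ z := by
    by_contra! hlt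
    exact not_swapEquiv_of_prefix_lt hlt (hN h (by simp [hq₁])) (by simpa [hq₁] using hequiv)
  have hright : ∃ z ∈ s, g ≤ z := by
    by_contra! hlt
    exact not_swapEquiv_of_suffix_lt (p := p ++ q) (p' := p ++ N :: q₂) hlt
      (hN g (by simp [hq₂])) (by simpa [hq₂] using hequiv.symm)
  -- So both sites are active on the sides facing away from `q`, and the letters there
  -- would each have to exceed the other.
  obtain ⟨x, hx, hhx⟩ := hleft
  obtain ⟨y, hy, hgy⟩ := hright
  obtain ⟨p₁, g₁, rfl⟩ := (List.eq_nil_or_concat' p).resolve_left (List.ne_nil_of_mem hx)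
  obtain ⟨h₁, s₁, rfl⟩ := List.exists_cons_of_ne_nil (List.ne_nil_of_mem hy)
  have hhg : h₁ < g₁ := by
    rcases hsite with hsite | hsite
    · exact absurd hhx (hsite h (by simp [hq₁]) x hx).not_ge
    · exact hsite g₁ (by simp) h₁ (by simp)
  have hgh : g₁ < h₁ := by
    rcases hsite' with hsite' | hsite'
    · exact hsite' h₁ (by simp) g₁ (by simp)
    · exact absurd hgy (hsite' g (by grind) y hy).not_ge
  exact hhg.asymm hgh

theorem SwapEquiv.eq_of_isActiveSite (hequiv : SwapEquiv (p ++ N :: s) (p' ++ N :: s'))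
    (heq : p ++ s = p' ++ s') (hN : ∀ z ∈ p ++ s, z < N) (hsite : IsActiveSite p s)
    (hsite' : IsActiveSite p' s') : p = p' ∧ s = s' := by
  rcases List.append_eq_append_iff.1 heq with ⟨q, rfl, rfl⟩ | ⟨q, rfl, rfl⟩
  · simp [hequiv.eq_nil_of_isActiveSite (by grind) hsite hsite']
  · simp [hequiv.symm.eq_nil_of_isActiveSite (by grind) hsite' hsite]

theorem SwapEquiv.of_insert_max (hequiv : SwapEquiv (p ++ N :: s) (p' ++ N :: s'))
    (hN : ∀ z ∈ p ++ s, z < N) (hN' : ∀ z ∈ p' ++ s', z < N) :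
    SwapEquiv (p ++ s) (p' ++ s') := by
  have hfilter : ∀ {q t : List α}, (∀ z ∈ q ++ t, z < N) →
      (q ++ N :: t).filter (· ∈ Set.Iio N) = q ++ t := fun {q t} h => by
    rw [List.filter_append, List.filter_cons_of_neg (by simp), ← List.filter_append]
    exact List.filter_eq_self.2 (by simpa using h)
  simpa only [hfilter hN, hfilter hN'] using hequiv.filter_mem (Set.Iio N)

theorem SwapEquiv.eq_of_avoidsBaxterPatterns (hequiv : SwapEquiv w w') (hnd : w.Nodup)
    (hw : AvoidsBaxterPatterns w) (hw' : AvoidsBaxterPatterns w') : w = w' := by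
  induction w, hnd using nodup_induction_on_max generalizing w' with
  | nil => exact hequiv.perm.nil_eq
  | insert p N s hnd _ hN ih =>
    obtain ⟨p', s', rfl⟩ := List.append_of_mem (hequiv.perm.mem_iff.1 (by simp : N ∈ p ++ N :: s))
    have hperm : (p ++ s).Perm (p' ++ s') :=
      (List.perm_middle.symm.trans (hequiv.perm.trans List.perm_middle)).cons_inv
    have hN' : ∀ z ∈ p' ++ s', z < N := fun z hz => hN z (hperm.mem_iff.2 hz)
    have heq : p ++ s = p' ++ s' :=
      ih (hequiv.of_insert_max hN hN') (hw.of_insert_max hN) (hw'.of_insert_max hN')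
    obtain ⟨rfl, rfl⟩ := hequiv.eq_of_isActiveSite heq hN (hw.isActiveSite hnd hN)
      (hw'.isActiveSite (hperm.nodup hnd) hN')
    rfl

theorem existsUnique_swapEquiv_avoidsBaxterPatterns (hnd : w.Nodup) :
    ∃! τ, SwapEquiv w τ ∧ AvoidsBaxterPatterns τ := by
  obtain ⟨τ, hτ, hav⟩ := exists_swapEquiv_avoidsBaxterPatterns hnd
  refine ⟨τ, ⟨hτ, hav⟩, fun ρ ⟨hρ, hav'⟩ => ?_⟩
  exact SwapEquiv.eq_of_avoidsBaxterPatterns (hρ.symm.trans hτ) (hρ.perm.nodup hnd) hav' hav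

end CanonicalForm

section Permutations

variable {w w' : List ℕ}

theorem isBaxterPerm_iff : IsBaxterPerm w ↔ AvoidsBaxterPatterns w := by
  constructor
  · intro h p s a d x y hw hx hy
    obtain ⟨p₁, p₂, rfl⟩ := List.append_of_mem hx
    obtain ⟨s₁, s₂, rfl⟩ := List.append_of_mem hy
    have hpattern := h p₁.length (p₁ ++ x :: p₂).length ((p₁ ++ x :: p₂).length + 2 + s₁.length)
      (by simp) (by omega) (by simp [hw]; omega)
    have hget : ∀ (q t : List ℕ) (b : ℕ), (q ++ b :: t).getD q.length 0 = b := by simp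
    have hi : w.getD p₁.length 0 = x := by simp [hw]
    have hj : w.getD (p₁ ++ x :: p₂).length 0 = a := hw ▸ hget _ _ a
    have hj' : w.getD ((p₁ ++ x :: p₂).length + 1) 0 = d := by
      simpa [hw, Nat.add_assoc] using hget (p₁ ++ x :: p₂ ++ [a]) (s₁ ++ y :: s₂) d
    have hk : w.getD ((p₁ ++ x :: p₂).length + 2 + s₁.length) 0 = y := by
      convert hget (p₁ ++ x :: p₂ ++ a :: d :: s₁) s₂ y using 2
      · simp [hw]
      · grind
    rwa [hi, hj, hj', hk] at hpattern
  · intro h i j k hij hjk hk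
    have hw : w = w.take j ++ w[j] :: w[j + 1] :: w.drop (j + 2) := by
      rw [← List.drop_eq_getElem_cons, ← List.drop_eq_getElem_cons, List.take_append_drop]
    have hi : w[i] ∈ w.take j := List.mem_take_iff_getElem.2 ⟨i, by omega, rfl⟩
    have hk' : w[k] ∈ w.drop (j + 2) :=
      List.mem_drop_iff_getElem.2 ⟨k - (j + 2), by omega, by congr 1; omega⟩
    simpa only [List.getD_eq_getElem w 0 (by omega : i < w.length),
      List.getD_eq_getElem w 0 (by omega : j < w.length),
      List.getD_eq_getElem w 0 (by omega : j + 1 < w.length),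
      List.getD_eq_getElem w 0 hk] using h hw hi hk'

theorem BaxterSwap.baxterEquiv (h : BaxterSwap w w') : BaxterEquiv w w' := by
  obtain @⟨p, s, a, d, x, y, hxp, hys, hx, hy⟩ := h
  wlog had : a < d generalizing a d
  · exact .symm _ _ (this (Set.uIoo_comm a d ▸ hx) (Set.uIoo_comm a d ▸ hy)
      (by grind [Set.uIoo]))
  rw [Set.uIoo_of_lt had] at hx hy
  obtain ⟨p₁, p₂, rfl⟩ := List.append_of_mem hxp
  obtain ⟨s₁, s₂, rfl⟩ := List.append_of_mem hys
  rcases le_or_gt x y with hxy | hyx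
  · exact .symm _ _ (.rel _ _ ⟨p₁, s₂, _, _,
      .inr ⟨a, x, y, d, p₂, s₁, hx.1, hxy, hy.2, rfl, rfl⟩, by simp, by simp⟩)
  · exact .rel _ _ ⟨p₁, s₂, _, _,
      .inl ⟨a, y, x, d, p₂, s₁, hy.1.le, hyx, hx.2.le, rfl, rfl⟩, by simp, by simp⟩

theorem BaxterStep.baxterSwap (h : BaxterStep w w') (hnd : w.Nodup) : BaxterSwap w w' := by
  obtain ⟨p, s, _, _, ⟨a, b, c, d, u, v, hab, hbc, hcd, rfl, rfl⟩ |
    ⟨a, b, c, d, u, v, hab, hbc, hcd, rfl, rfl⟩, rfl, rfl⟩ := h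
  · have hab' : a ≠ b := by grind
    have hcd' : c ≠ d := by grind
    simpa using BaxterSwap.swap (p := p ++ c :: u) (s := v ++ b :: s) (a := a) (d := d)
      (x := c) (y := b) (by simp) (by simp) (by grind [Set.uIoo]) (by grind [Set.uIoo])
  · simpa using BaxterSwap.swap (p := p ++ b :: u) (s := v ++ c :: s) (a := d) (d := a)
      (x := b) (y := c) (by simp) (by simp) (by grind [Set.uIoo]) (by grind [Set.uIoo])

theorem BaxterStep.perm (h : BaxterStep w w') : w.Perm w' := by
  obtain ⟨p, s, _, _, ⟨a, b, c, d, u, v, -, -, -, rfl, rfl⟩ |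
    ⟨a, b, c, d, u, v, -, -, -, rfl, rfl⟩, rfl, rfl⟩ := h
  · simpa using (List.Perm.swap d a (v ++ b :: s)).append_left (p ++ c :: u)
  · simpa using (List.Perm.swap a d (v ++ c :: s)).append_left (p ++ b :: u)

theorem BaxterEquiv.perm (h : BaxterEquiv w w') : w.Perm w' := by
  induction h with
  | rel _ _ hstep => exact hstep.perm
  | refl _ => exact .refl _
  | symm _ _ _ ih => exact ih.symm
  | trans _ _ _ _ _ ih₁ ih₂ => exact ih₁.trans ih₂

theorem BaxterEquiv.swapEquiv (h : BaxterEquiv w w') (hnd : w.Nodup) : SwapEquiv w w' := by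
  induction h with
  | rel _ _ hstep => exact .single (hstep.baxterSwap hnd)
  | refl _ => exact .refl
  | symm _ _ h ih => exact (ih ((perm h).nodup_iff.2 hnd)).symm
  | trans _ _ _ h₁ _ ih₁ ih₂ => exact (ih₁ hnd).trans (ih₂ ((perm h₁).nodup hnd))

theorem SwapEquiv.baxterEquiv (h : SwapEquiv w w') : BaxterEquiv w w' := by
  induction h with
  | refl => exact .refl _
  | tail _ hswap ih => exact .trans _ _ _ ih hswap.baxterEquiv

theorem baxterEquiv_iff_swapEquiv (hnd : w.Nodup) : BaxterEquiv w w' ↔ SwapEquiv w w' :=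
  ⟨fun h => h.swapEquiv hnd, SwapEquiv.baxterEquiv⟩

theorem baxter_class_unique_baxter_permutation_general {σ : List ℕ} (hσ : σ.Nodup) :
    ∃! τ : List ℕ, BaxterEquiv σ τ ∧ IsBaxterPerm τ := by
  simpa only [baxterEquiv_iff_swapEquiv hσ, isBaxterPerm_iff] using
    existsUnique_swapEquiv_avoidsBaxterPatterns hσ

end Permutations

/-- every Baxter equivalence class of permutations of size `n`
contains exactly one Baxter permutation. -/
theorem baxter_class_unique_baxter_permutation (n : ℕ) (σ : List ℕ)
    (hσ : IsPerm n σ) :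
    ∃! τ : List ℕ, IsPerm n τ ∧ BaxterEquiv σ τ ∧ IsBaxterPerm τ := by
  refine (existsUnique_congr fun τ => and_iff_right_of_imp fun hτ => ?_).2
    (baxter_class_unique_baxter_permutation_general (hσ.nodup_iff.2 List.nodup_range'))
  exact hτ.1.perm.symm.trans hσ
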